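/- arXiv:1504.04107 — 6 statements merged into one kernel-verified Lean document; each statement's English description precedes it below -/
import Mathlib

section
/- Let V be a real vector space and N : V → ℝ a convex function. Let f : V → V and h_FE : V → ℝ with h_FE(u) > 0 for all u, and assume the forward Euler condition: for all u ∈ V and all real h with 0 ≤ h ≤ h_FE(u) one has N(u + h·f(u)) ≤ N(u). Fix an integer k ≥ 1, a sequence (u_n)_{n≥0} in V, nonnegative step sizes h_n, and for each n ≥ k nonnegative coefficients α_{j,n}, β_{j,n} (0 ≤ j ≤ k−1) with Σ_{j=0}^{k−1} α_{j,n} = 1, such that u_n = Σ_{j=0}^{k−1} ( α_{j,n} u_{n−k+j} + h_n β_{j,n} f(u_{n−k+j}) ) and, for every j with β_{j,n} > 0, h_n ≤ (α_{j,n}/β_{j,n}) · h_FE(u_{n−k+j}). Then for every n ≥ k, N(u_n) ≤ max_{0 ≤ j ≤ k−1} N(u_{n−k+j}). -/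
/-! When `α > 0`, the term `α u + h β f(u)` of the method is `α` times a forward Euler step from `u`
of size `h β / α`, and the step size restriction says exactly that this size is at most `h_FE(u)`;
when `α = 0`, the restriction forces `h β = 0`. Hence all these Euler steps lie in the sublevel set
of `N` at the maximum of the previous values. That set is convex, so it contains the new value,
which is a convex combination of them. -/

section

variable {𝕜 V E ι : Type*} [Field 𝕜] [LinearOrder 𝕜]

theorem mul_le_mul_of_le_div_mul [IsStrictOrderedRing 𝕜] {a b h r : 𝕜} (hb : 0 < b)
    (hle : h ≤ a / b * r) : h * b ≤ a * r := by
  rwa [div_mul_eq_mul_div, le_div_iff₀ hb] at hle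

variable [AddCommGroup V] [Module 𝕜 V]

theorem quasiconvexOn_map_sum_le [IsStrictOrderedRing 𝕜] [LE E] {s : Set V} {N : V → E}
    (hN : QuasiconvexOn 𝕜 s N) {t : Finset ι} {w : ι → 𝕜} {p : ι → V} {M : E}
    (hw : ∀ i ∈ t, 0 ≤ w i) (hsum : ∑ i ∈ t, w i = 1) (hps : ∀ i ∈ t, p i ∈ s)
    (hpM : ∀ i ∈ t, N (p i) ≤ M) : N (∑ i ∈ t, w i • p i) ≤ M :=
  ((hN M).sum_mem hw hsum fun i hi => ⟨hps i hi, hpM i hi⟩).2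

/-- The forward Euler condition: an explicit Euler step from `u` along the vector field `f`, of size
at most `hFE u`, does not increase the functional `N`. It is the property that strong stability
preserving methods inherit. The bound `hFE` is a function of `u`, since with variable step sizes it
may differ from one step to the next. -/
def ForwardEulerCondition [LE E] (N : V → E) (f : V → V) (hFE : V → 𝕜) : Prop :=
  ∀ (u : V) (h : 𝕜), 0 ≤ h → h ≤ hFE u → N (u + h • f u) ≤ N u

namespace ForwardEulerCondition

variable [IsStrictOrderedRing 𝕜] [Preorder E] {N : V → E} {f : V → V} {hFE : V → 𝕜}

theorem exists_le_and_smul_add_smul_eq (hfe : ForwardEulerCondition N f hFE) {a c : 𝕜} {v : V}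
    (ha : 0 ≤ a) (hc : 0 ≤ c) (hac : 0 < c → c ≤ a * hFE v) :
    ∃ w, N w ≤ N v ∧ a • v + c • f v = a • w := by
  obtain rfl | hc_pos := hc.eq_or_lt
  · exact ⟨v, le_rfl, by simp⟩
  have hle : c ≤ a * hFE v := hac hc_pos
  have ha_ne : a ≠ 0 := left_ne_zero_of_mul (hc_pos.trans_le hle).ne'
  have ha_pos : 0 < a := ha.lt_of_ne' ha_ne
  refine ⟨v + (c / a) • f v, hfe v (c / a) (div_nonneg hc ha) ((div_le_iff₀' ha_pos).mpr hle), ?_⟩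
  rw [smul_add, smul_smul, mul_div_cancel₀ c ha_ne]

theorem map_sum_smul_add_smul_le (hfe : ForwardEulerCondition N f hFE)
    (hN : QuasiconvexOn 𝕜 Set.univ N) {t : Finset ι} {a c : ι → 𝕜} {v : ι → V} {M : E}
    (ha : ∀ i ∈ t, 0 ≤ a i) (hsum : ∑ i ∈ t, a i = 1) (hc : ∀ i ∈ t, 0 ≤ c i)
    (hac : ∀ i ∈ t, 0 < c i → c i ≤ a i * hFE (v i)) (hvM : ∀ i ∈ t, N (v i) ≤ M) :
    N (∑ i ∈ t, (a i • v i + c i • f (v i))) ≤ M := by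
  choose! w hwv hw_eq using fun i hi =>
    hfe.exists_le_and_smul_add_smul_eq (ha i hi) (hc i hi) (hac i hi)
  rw [Finset.sum_congr rfl hw_eq]
  exact quasiconvexOn_map_sum_le hN ha hsum (fun _ _ => Set.mem_univ _)
    fun i hi => (hwv i hi).trans (hvM i hi)

end ForwardEulerCondition

theorem ssp_lmm_discrete_monotonicity_general [IsStrictOrderedRing 𝕜] [SemilatticeSup E]
    {N : V → E} (hN : QuasiconvexOn 𝕜 Set.univ N) {f : V → V} {hFE : V → 𝕜}
    (hfe : ForwardEulerCondition N f hFE) {k : ℕ} (hk : k ≠ 0)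
    {u : ℕ → V} {h : ℕ → 𝕜} {α β : ℕ → ℕ → 𝕜} (hh : ∀ n, k ≤ n → 0 ≤ h n)
    (hα : ∀ n, k ≤ n → ∀ j < k, 0 ≤ α j n) (hβ : ∀ n, k ≤ n → ∀ j < k, 0 ≤ β j n)
    (hsum : ∀ n, k ≤ n → ∑ j ∈ Finset.range k, α j n = 1)
    (hrec : ∀ n, k ≤ n → u n = ∑ j ∈ Finset.range k,
      (α j n • u (n - k + j) + (h n * β j n) • f (u (n - k + j))))
    (hstep : ∀ n, k ≤ n → ∀ j < k, 0 < β j n → h n ≤ α j n / β j n * hFE (u (n - k + j)))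
    (n : ℕ) (hn : k ≤ n) :
    N (u n) ≤ (Finset.range k).sup' (Finset.nonempty_range_iff.mpr hk)
      (fun j => N (u (n - k + j))) := by
  simp only [← Finset.mem_range (n := k)] at hα hβ hstep
  rw [hrec n hn]
  refine hfe.map_sum_smul_add_smul_le hN (hα n hn) (hsum n hn)
    (fun j hj => mul_nonneg (hh n hn) (hβ n hn j hj)) (fun j hj hpos => ?_)
    (fun j hj => Finset.le_sup' (fun j => N (u (n - k + j))) hj)
  have hβ_pos : 0 < β j n := pos_of_mul_pos_right hpos (hh n hn)
  exact mul_le_mul_of_le_div_mul hβ_pos (hstep n hn j hj hβ_pos)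

end

/-- **Discrete monotonicity (SSP property) of variable step-size explicit linear
multistep methods.**  If `f` satisfies the forward Euler condition for the convex
functional `N`, the method has nonnegative coefficients summing to one, and the step
sizes obey the SSP restriction, then each computed value satisfies
`N (u n) ≤ max over the previous k values`. -/
theorem ssp_lmm_discrete_monotonicity
    (V : Type*) [AddCommGroup V] [Module ℝ V]
    (N : V → ℝ) (hN : ConvexOn ℝ Set.univ N)
    (f : V → V) (hFE : V → ℝ) (hFEpos : ∀ u, 0 < hFE u)
    (hfe : ∀ (u : V) (h : ℝ), 0 ≤ h → h ≤ hFE u → N (u + h • f u) ≤ N u)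
    (k : ℕ) (hk : 1 ≤ k)
    (u : ℕ → V) (h : ℕ → ℝ) (α β : ℕ → ℕ → ℝ)
    (hh : ∀ n, k ≤ n → 0 ≤ h n)
    (hαnn : ∀ n, k ≤ n → ∀ j < k, 0 ≤ α j n)
    (hβnn : ∀ n, k ≤ n → ∀ j < k, 0 ≤ β j n)
    (hsum : ∀ n, k ≤ n → (∑ j ∈ Finset.range k, α j n) = 1)
    (hrec : ∀ n, k ≤ n →
      u n = ∑ j ∈ Finset.range k,
        (α j n • u (n - k + j) + (h n * β j n) • f (u (n - k + j))))
    (hstep : ∀ n, k ≤ n → ∀ j < k, 0 < β j n →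
      h n ≤ (α j n / β j n) * hFE (u (n - k + j))) :
    ∀ n, k ≤ n →
      N (u n) ≤ (Finset.range k).sup'
        (Finset.nonempty_range_iff.mpr (by omega))
        (fun j => N (u (n - k + j))) :=
  ssp_lmm_discrete_monotonicity_general hN.quasiconvexOn hfe (Nat.one_le_iff_ne_zero.mp hk)
    hh hαnn hβnn hsum hrec hstep
end

section
/- Let p ≥ 2 be an integer and suppose there exist a real r > 0 and nonnegative vectors δ, β satisfying the order-p conditions with parameter r. Then the supremum r* = sup{ r > 0 : there exist nonnegative δ, β satisfying the order-p conditions with parameter r } is finite, and it is attained: there exist nonnegative vectors δ*, β* satisfying the order-p conditions with parameter r*. In other words, if a k-step formula of order p with positive SSP coefficient exists, then a k-step formula of order p whose SSP coefficient equals the optimal one exists. -/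
/-- Cumulative step-size ratios: `OmegaSum ω j = ω 1 + ⋯ + ω j` (with `OmegaSum ω 0 = 0`). -/
noncomputable def OmegaSum (ω : ℕ → ℝ) (j : ℕ) : ℝ := ∑ i ∈ Finset.range j, ω (i + 1)

/-- The order-`p` conditions with parameter `r` for a `k`-step explicit linear multistep
formula with coefficient vectors `δ`, `β` and step-size ratios `ω`:
`Σ_{j<k} (δ j + r β j) = 1` and, for `1 ≤ m ≤ p`,
`Σ_{j<k} ( Ω_j^m (δ j + r β j) + m Ω_j^{m-1} β j ) = Ω_k^m`. -/
def OrderCond (k p : ℕ) (ω : ℕ → ℝ) (r : ℝ) (δ β : ℕ → ℝ) : Prop :=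
  (∑ j ∈ Finset.range k, (δ j + r * β j)) = 1 ∧
  ∀ m : ℕ, 1 ≤ m → m ≤ p →
    (∑ j ∈ Finset.range k,
        ((OmegaSum ω j) ^ m * (δ j + r * β j)
          + (m : ℝ) * (OmegaSum ω j) ^ (m - 1) * β j))
      = (OmegaSum ω k) ^ m

/-! The conditions `m = 0` and `m = 1` together say that the weights `γ j = δ j + r * β j` form a
convex combination with `∑ β j = ∑ (Ω_k - Ω_j) * γ j`. Since `r * ∑ β j ≤ ∑ γ j = 1` and every gap
`Ω_k - Ω_j` is positive, this identity bounds `r`, `δ` and `β` a priori. The order conditions are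
closed, so the bounded formulas are compact and the largest parameter among them is attained. -/

open Finset

theorem OmegaSum_lt_OmegaSum {ω : ℕ → ℝ} {j k : ℕ} (hjk : j < k)
    (hω : ∀ i, j < i ∧ i ≤ k → 0 < ω i) : OmegaSum ω j < OmegaSum ω k := by
  have hpos (i : ℕ) (hi : i ∈ range k) (hij : i ∉ range j) : 0 < ω (i + 1) := by
    rw [mem_range] at hi hij
    exact hω (i + 1) (by lia)
  have hj : j ∈ range k := mem_range.2 hjk
  exact sum_lt_sum_of_subset (range_mono hjk.le) hj notMem_range_self
    (hpos j hj notMem_range_self) fun i hi hij ↦ (hpos i hi hij).le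

theorem isGreatest_csSup_Ioi_inter {α : Type*} [ConditionallyCompleteLinearOrder α]
    [TopologicalSpace α] [ClosedIciTopology α] {c : α} {T : Set α} (hT : IsCompact T)
    (hne : (Set.Ioi c ∩ T).Nonempty) :
    IsGreatest (Set.Ioi c ∩ T) (sSup (Set.Ioi c ∩ T)) := by
  obtain ⟨x, hcx, hxT⟩ := hne
  obtain ⟨a, haT, hub⟩ := hT.exists_isGreatest ⟨x, hxT⟩
  have ha : IsGreatest (Set.Ioi c ∩ T) a :=
    ⟨⟨lt_of_lt_of_le hcx (hub hxT), haT⟩, fun y hy ↦ hub hy.2⟩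
  rwa [ha.csSup_eq]

variable {k p : ℕ} {ω : ℕ → ℝ} {r : ℝ} {δ β : ℕ → ℝ}

namespace OrderCond

theorem congr {δ' β' : ℕ → ℝ} (h : OrderCond k p ω r δ β)
    (hδ : ∀ j < k, δ' j = δ j) (hβ : ∀ j < k, β' j = β j) : OrderCond k p ω r δ' β' := by
  refine ⟨?_, fun m hm hmp ↦ ?_⟩
  · rw [← h.1]
    refine sum_congr rfl fun j hj ↦ ?_
    rw [hδ j (mem_range.1 hj), hβ j (mem_range.1 hj)]
  · rw [← h.2 m hm hmp]
    refine sum_congr rfl fun j hj ↦ ?_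
    rw [hδ j (mem_range.1 hj), hβ j (mem_range.1 hj)]

theorem indicator_Iio (h : OrderCond k p ω r δ β) :
    OrderCond k p ω r ((Set.Iio k).indicator δ) ((Set.Iio k).indicator β) :=
  h.congr (fun _ hj ↦ Set.indicator_of_mem (Set.mem_Iio.2 hj) δ)
    fun _ hj ↦ Set.indicator_of_mem (Set.mem_Iio.2 hj) β

theorem sum_beta_eq_sum_gap_mul (h : OrderCond k p ω r δ β) (hp : 1 ≤ p) :
    ∑ j ∈ range k, β j = ∑ j ∈ range k, (OmegaSum ω k - OmegaSum ω j) * (δ j + r * β j) := by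
  have hfirst : ∑ j ∈ range k, OmegaSum ω j * (δ j + r * β j) + ∑ j ∈ range k, β j
      = OmegaSum ω k := by
    simpa [sum_add_distrib] using h.2 1 le_rfl hp
  simp only [sub_mul, sum_sub_distrib, ← mul_sum, h.1]
  linarith

end OrderCond

theorem isClosed_setOf_orderCond (k p : ℕ) (ω : ℕ → ℝ) :
    IsClosed {x : ℝ × (ℕ → ℝ) × (ℕ → ℝ) | OrderCond k p ω x.1 x.2.1 x.2.2} := by
  simp only [OrderCond, Set.ofPred_and, Set.ofPred_forall]
  refine (isClosed_eq (by fun_prop) (by fun_prop)).inter ?_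
  exact isClosed_iInter fun m ↦ isClosed_iInter fun _ ↦ isClosed_iInter fun _ ↦
    isClosed_eq (by fun_prop) (by fun_prop)

/-- The pair `(δ, β)` is a `k`-step formula of order `p` whose SSP coefficient is at least `r`
(for `0 ≤ r`). Only the entries with index below `k` are constrained. -/
def IsSSPFormula (k p : ℕ) (ω : ℕ → ℝ) (r : ℝ) (δ β : ℕ → ℝ) : Prop :=
  (∀ j < k, 0 ≤ δ j) ∧ (∀ j < k, 0 ≤ β j) ∧ OrderCond k p ω r δ β

/-- The positive parameters `r` achieved by some `k`-step formula of order `p`; their supremum is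
the optimal SSP coefficient. -/
def sspParams (k p : ℕ) (ω : ℕ → ℝ) : Set ℝ :=
  {r : ℝ | 0 < r ∧ ∃ δ β : ℕ → ℝ, IsSSPFormula k p ω r δ β}

/-- The formulas of order `p`, as triples `(r, δ, β)`, inside the box where `δ ≤ 1` and `r`, `β`
obey the a priori bounds `∑ (Ω_k - Ω_j)⁻¹`, `∑ (Ω_k - Ω_j)`. Nonnegativity and the bounds are
imposed on all entries of the sequences, also those with index at least `k`, so that the box is an
order interval, hence compact. -/
def boundedFormulas (k p : ℕ) (ω : ℕ → ℝ) : Set (ℝ × (ℕ → ℝ) × (ℕ → ℝ)) :=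
  Set.Icc 0 (∑ j ∈ range k, (OmegaSum ω k - OmegaSum ω j)⁻¹, fun _ ↦ 1,
    fun _ ↦ ∑ j ∈ range k, (OmegaSum ω k - OmegaSum ω j)) ∩
  {x | OrderCond k p ω x.1 x.2.1 x.2.2}

theorem isCompact_boundedFormulas (k p : ℕ) (ω : ℕ → ℝ) : IsCompact (boundedFormulas k p ω) :=
  isCompact_Icc.inter_right (isClosed_setOf_orderCond k p ω)

namespace IsSSPFormula

theorem weight_nonneg (h : IsSSPFormula k p ω r δ β) (hr : 0 ≤ r) {j : ℕ} (hj : j < k) :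
    0 ≤ δ j + r * β j :=
  add_nonneg (h.1 j hj) (mul_nonneg hr (h.2.1 j hj))

theorem weight_le_one (h : IsSSPFormula k p ω r δ β) (hr : 0 ≤ r) {j : ℕ} (hj : j < k) :
    δ j + r * β j ≤ 1 := by
  rw [← h.2.2.1]
  exact single_le_sum (f := fun j ↦ δ j + r * β j)
    (fun i hi ↦ h.weight_nonneg hr (mem_range.1 hi)) (mem_range.2 hj)

theorem delta_le_one (h : IsSSPFormula k p ω r δ β) (hr : 0 ≤ r) {j : ℕ} (hj : j < k) :
    δ j ≤ 1 :=
  (le_add_of_nonneg_right (mul_nonneg hr (h.2.1 j hj))).trans (h.weight_le_one hr hj)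

theorem mul_sum_beta_le_one (h : IsSSPFormula k p ω r δ β) :
    r * ∑ j ∈ range k, β j ≤ 1 := by
  rw [← h.2.2.1, mul_sum]
  exact sum_le_sum fun j hj ↦ le_add_of_nonneg_left (h.1 j (mem_range.1 hj))

theorem gap_mul_weight_le_sum_beta (h : IsSSPFormula k p ω r δ β) (hr : 0 ≤ r) (hp : 1 ≤ p)
    (hΩ : ∀ j < k, OmegaSum ω j ≤ OmegaSum ω k) {j : ℕ} (hj : j < k) :
    (OmegaSum ω k - OmegaSum ω j) * (δ j + r * β j) ≤ ∑ i ∈ range k, β i := by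
  rw [h.2.2.sum_beta_eq_sum_gap_mul hp]
  refine single_le_sum (f := fun i ↦ (OmegaSum ω k - OmegaSum ω i) * (δ i + r * β i))
    (fun i hi ↦ ?_) (mem_range.2 hj)
  have hik := mem_range.1 hi
  exact mul_nonneg (sub_nonneg.2 (hΩ i hik)) (h.weight_nonneg hr hik)

theorem le_sum_inv_gap (h : IsSSPFormula k p ω r δ β) (hr : 0 ≤ r) (hp : 1 ≤ p)
    (hΩ : ∀ j < k, OmegaSum ω j < OmegaSum ω k) :
    r ≤ ∑ j ∈ range k, (OmegaSum ω k - OmegaSum ω j)⁻¹ := by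
  have hweight (j : ℕ) (hj : j < k) : r * (δ j + r * β j) ≤ (OmegaSum ω k - OmegaSum ω j)⁻¹ := by
    rw [← one_div, le_div_iff₀' (sub_pos.2 (hΩ j hj))]
    calc (OmegaSum ω k - OmegaSum ω j) * (r * (δ j + r * β j))
        = r * ((OmegaSum ω k - OmegaSum ω j) * (δ j + r * β j)) := mul_left_comm _ _ _
      _ ≤ r * ∑ i ∈ range k, β i := by
          gcongr
          exact h.gap_mul_weight_le_sum_beta hr hp (fun i hi ↦ (hΩ i hi).le) hj
      _ ≤ 1 := h.mul_sum_beta_le_one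
  calc r = ∑ j ∈ range k, r * (δ j + r * β j) := by rw [← mul_sum, h.2.2.1, mul_one]
    _ ≤ ∑ j ∈ range k, (OmegaSum ω k - OmegaSum ω j)⁻¹ :=
        sum_le_sum fun j hj ↦ hweight j (mem_range.1 hj)

theorem beta_le_sum_gap (h : IsSSPFormula k p ω r δ β) (hr : 0 ≤ r) (hp : 1 ≤ p)
    (hΩ : ∀ j < k, OmegaSum ω j ≤ OmegaSum ω k) {j : ℕ} (hj : j < k) :
    β j ≤ ∑ i ∈ range k, (OmegaSum ω k - OmegaSum ω i) :=
  calc β j ≤ ∑ i ∈ range k, β i :=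
        single_le_sum (fun i hi ↦ h.2.1 i (mem_range.1 hi)) (mem_range.2 hj)
    _ = ∑ i ∈ range k, (OmegaSum ω k - OmegaSum ω i) * (δ i + r * β i) :=
        h.2.2.sum_beta_eq_sum_gap_mul hp
    _ ≤ ∑ i ∈ range k, (OmegaSum ω k - OmegaSum ω i) :=
        sum_le_sum fun i hi ↦ mul_le_of_le_one_right (sub_nonneg.2 (hΩ i (mem_range.1 hi)))
          (h.weight_le_one hr (mem_range.1 hi))

theorem indicator_mem_boundedFormulas (h : IsSSPFormula k p ω r δ β) (hr : 0 ≤ r) (hp : 1 ≤ p)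
    (hΩ : ∀ j < k, OmegaSum ω j < OmegaSum ω k) :
    (r, (Set.Iio k).indicator δ, (Set.Iio k).indicator β) ∈ boundedFormulas k p ω := by
  have hgap : ∀ j < k, OmegaSum ω j ≤ OmegaSum ω k := fun j hj ↦ (hΩ j hj).le
  have hsum : 0 ≤ ∑ j ∈ range k, (OmegaSum ω k - OmegaSum ω j) :=
    sum_nonneg fun j hj ↦ sub_nonneg.2 (hgap j (mem_range.1 hj))
  refine ⟨⟨⟨hr, ?_, ?_⟩, h.le_sum_inv_gap hr hp hΩ, ?_, ?_⟩, h.2.2.indicator_Iio⟩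
  · exact fun _ ↦ Set.indicator_apply_nonneg (h.1 _)
  · exact fun _ ↦ Set.indicator_apply_nonneg (h.2.1 _)
  · exact fun _ ↦ Set.indicator_apply_le' (h.delta_le_one hr) fun _ ↦ zero_le_one
  · exact fun _ ↦ Set.indicator_apply_le' (h.beta_le_sum_gap hr hp hgap) fun _ ↦ hsum

end IsSSPFormula

theorem sspParams_eq_Ioi_inter_image (hp : 1 ≤ p) (hΩ : ∀ j < k, OmegaSum ω j < OmegaSum ω k) :
    sspParams k p ω = Set.Ioi 0 ∩ Prod.fst '' boundedFormulas k p ω := by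
  ext r
  constructor
  · rintro ⟨hr, δ, β, h⟩
    exact ⟨hr, _, h.indicator_mem_boundedFormulas hr.le hp hΩ, rfl⟩
  · rintro ⟨hr, ⟨_, δ, β⟩, ⟨⟨⟨_, hδ, hβ⟩, _⟩, hord⟩, rfl⟩
    exact ⟨hr, δ, β, fun j _ ↦ hδ j, fun j _ ↦ hβ j, hord⟩

theorem optimal_ssp_formula_exists_general (hp : 1 ≤ p)
    (hΩ : ∀ j < k, OmegaSum ω j < OmegaSum ω k) (hex : (sspParams k p ω).Nonempty) :
    IsGreatest (sspParams k p ω) (sSup (sspParams k p ω)) := by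
  rw [sspParams_eq_Ioi_inter_image hp hΩ] at hex ⊢
  exact isGreatest_csSup_Ioi_inter ((isCompact_boundedFormulas k p ω).image continuous_fst) hex

/-- **Existence of an optimal formula.**  If for `p ≥ 2` some `k`-step formula of order
`p` with positive SSP coefficient exists, then the set of achievable positive SSP
parameters is bounded above, and its supremum is attained by some formula. -/
theorem optimal_ssp_formula_exists
    (k p : ℕ) (hk : 1 ≤ k) (hp : 2 ≤ p)
    (ω : ℕ → ℝ) (hω : ∀ i, 1 ≤ i → i ≤ k → 0 < ω i)
    (hex : ∃ r : ℝ, 0 < r ∧ ∃ δ β : ℕ → ℝ,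
      (∀ j < k, 0 ≤ δ j) ∧ (∀ j < k, 0 ≤ β j) ∧ OrderCond k p ω r δ β) :
    BddAbove {r : ℝ | 0 < r ∧ ∃ δ β : ℕ → ℝ,
      (∀ j < k, 0 ≤ δ j) ∧ (∀ j < k, 0 ≤ β j) ∧ OrderCond k p ω r δ β} ∧
    ∃ δ β : ℕ → ℝ, (∀ j < k, 0 ≤ δ j) ∧ (∀ j < k, 0 ≤ β j) ∧
      OrderCond k p ω
        (sSup {r : ℝ | 0 < r ∧ ∃ δ β : ℕ → ℝ,
          (∀ j < k, 0 ≤ δ j) ∧ (∀ j < k, 0 ≤ β j) ∧ OrderCond k p ω r δ β})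
        δ β := by
  have hmax : IsGreatest (sspParams k p ω) (sSup (sspParams k p ω)) :=
    optimal_ssp_formula_exists_general (by lia)
      (fun j hj ↦ OmegaSum_lt_OmegaSum hj fun i hi ↦ hω i (by lia) hi.2) hex
  exact ⟨hmax.bddAbove, hmax.1.2⟩
end

section
/- Let k ≥ 2 and write Ω = Ω_{k−1}, and assume Ω ≥ 2. Define coefficient vectors α, β (indexed 0 ≤ j ≤ k−1) by α_{k−1} = (Ω+1)²(Ω−2)/Ω³, β_{k−1} = (Ω+1)²/Ω², α₀ = (3Ω+2)/Ω³, β₀ = (Ω+1)/Ω², and all other entries zero. Then: (a) α and β are nonnegative and satisfy the third-order conditions in (α, β) form: Σ_{j=0}^{k−1} α_j = 1 and Σ_{j=0}^{k−1} ( Ω_j^m α_j + m Ω_j^{m−1} β_j ) = Ω_k^m for m = 1, 2, 3; and (b) the SSP coefficient of this formula, namely min( α_{k−1}/β_{k−1}, α₀/β₀ ), equals (Ω − 2)/Ω if 2 ≤ Ω ≤ 2(1+√2), and equals (3Ω + 2)/(Ω(Ω + 1)) if Ω > 2(1+√2). -/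
/-!
The formula is cubic Hermite extrapolation: if `p` is the cubic polynomial matching the values and
slopes of a function at the nodes `0` and `x`, then `p (x + h)` is a combination of these four data
whose weights are exactly `α₀, β₀, α_{k-1}, β_{k-1}` (for `x = Ω_{k-1}` and `h = ω_k`). The order
conditions say that the rule is exact on `1, t, t², t³`. The two candidates for the SSP coefficient
differ by a positive multiple of `x² - 4hx - 4h²`, whose positive root is `x = 2(1 + √2)h`.
-/

open Polynomial

section EndpointCoeff

variable {R : Type*}

/-- The coefficient vector of a `k`-step formula which uses only its oldest step, with weight `a`,
and its newest step, with weight `b`. If `k ≤ 1` both steps have index `0`, where the entry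
is `b`. -/
def endpointCoeff [Zero R] (k : ℕ) (a b : R) (j : ℕ) : R :=
  if j = k - 1 then b else if j = 0 then a else 0

theorem endpointCoeff_pred [Zero R] (k : ℕ) (a b : R) : endpointCoeff k a b (k - 1) = b :=
  if_pos rfl

theorem endpointCoeff_zero [Zero R] {k : ℕ} (hk : 1 < k) (a b : R) :
    endpointCoeff k a b 0 = a := by
  simp [endpointCoeff, (Nat.sub_pos_of_lt hk).ne]

theorem endpointCoeff_nonneg [Zero R] [Preorder R] {a b : R} (ha : 0 ≤ a) (hb : 0 ≤ b) (k j : ℕ) :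
    0 ≤ endpointCoeff k a b j := by
  unfold endpointCoeff
  split_ifs <;> first | assumption | exact le_rfl

theorem mul_endpointCoeff [MulZeroClass R] (k : ℕ) (a b : R) (c : ℕ → R) (j : ℕ) :
    c j * endpointCoeff k a b j = endpointCoeff k (c 0 * a) (c (k - 1) * b) j := by
  unfold endpointCoeff
  split_ifs <;> simp_all

theorem sum_endpointCoeff [AddCommMonoid R] {k : ℕ} (hk : 1 < k) (a b : R) :
    ∑ j ∈ Finset.range k, endpointCoeff k a b j = a + b := by
  rw [Finset.sum_eq_add_of_mem 0 (k - 1) (by simp; omega) (by simp; omega) (by omega),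
    endpointCoeff_zero hk, endpointCoeff_pred]
  rintro j - ⟨hj_first, hj_last⟩
  simp [endpointCoeff, hj_first, hj_last]

theorem sum_mul_endpointCoeff [NonUnitalNonAssocSemiring R] {k : ℕ} (hk : 1 < k) (a b : R)
    (c : ℕ → R) :
    ∑ j ∈ Finset.range k, c j * endpointCoeff k a b j = c 0 * a + c (k - 1) * b :=
  (Finset.sum_congr rfl fun j _ => mul_endpointCoeff k a b c j).trans (sum_endpointCoeff hk _ _)

end EndpointCoeff

section OmegaSum

theorem omegaSum_zero (ω : ℕ → ℝ) : OmegaSum ω 0 = 0 :=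
  Finset.sum_range_zero _

theorem omegaSum_pred_add {k : ℕ} (hk : 0 < k) (ω : ℕ → ℝ) :
    OmegaSum ω (k - 1) + ω k = OmegaSum ω k := by
  obtain ⟨n, rfl⟩ := Nat.exists_eq_add_one.mpr hk
  exact (Finset.sum_range_succ _ n).symm

theorem one_lt_of_omegaSum_pred_ne_zero {k : ℕ} {ω : ℕ → ℝ} (h : OmegaSum ω (k - 1) ≠ 0) :
    1 < k := by
  by_contra! hk
  exact h (by rw [Nat.sub_eq_zero_of_le hk, omegaSum_zero])

end OmegaSum

theorem eval_add_eq_cubic_hermite {K : Type*} [Field K] {p : K[X]} (hp : p.natDegree ≤ 3)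
    {x : K} (hx : x ≠ 0) (h : K) :
    p.eval (x + h) =
      (h ^ 2 * (3 * x + 2 * h) / x ^ 3 * p.eval 0 +
        (x + h) ^ 2 * (x - 2 * h) / x ^ 3 * p.eval x) +
      (h ^ 2 * (x + h) / x ^ 2 * p.derivative.eval 0 +
        h * (x + h) ^ 2 / x ^ 2 * p.derivative.eval x) := by
  rw [p.as_sum_range_C_mul_X_pow' (Nat.lt_succ_of_le hp)]
  simp only [Finset.sum_range_succ, Finset.sum_range_zero, derivative_add, derivative_C_mul_X_pow,
    derivative_C, eval_add, eval_mul, eval_C, eval_pow, eval_X, Nat.cast_ofNat,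
    Nat.cast_one, Nat.reduceSub, ne_eq, OfNat.ofNat_ne_zero, one_ne_zero, not_false_eq_true,
    zero_pow, pow_zero, mul_zero, mul_one, zero_add, add_zero]
  field_simp
  ring

/-- At `r = 0` the vector `δ = α - r β` of `OrderCond` is `α` itself. -/
theorem orderCond_three_cubic_hermite {k : ℕ} {ω : ℕ → ℝ} {x h : ℝ} (hx : OmegaSum ω (k - 1) = x)
    (hh : ω k = h) (hx0 : x ≠ 0) :
    OrderCond k 3 ω 0
      (endpointCoeff k (h ^ 2 * (3 * x + 2 * h) / x ^ 3) ((x + h) ^ 2 * (x - 2 * h) / x ^ 3))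
      (endpointCoeff k (h ^ 2 * (x + h) / x ^ 2) (h * (x + h) ^ 2 / x ^ 2)) := by
  subst hx hh
  have hk : 1 < k := one_lt_of_omegaSum_pred_ne_zero hx0
  have exact_on_X_pow (m : ℕ) (hm : m ≤ 3) :=
    eval_add_eq_cubic_hermite (p := X ^ m) ((natDegree_X_pow_le m).trans hm) hx0 (ω k)
  simp only [OrderCond, zero_mul, add_zero]
  constructor
  · simpa [sum_endpointCoeff hk] using (exact_on_X_pow 0 (Nat.zero_le 3)).symm
  · intro m _ hm
    rw [Finset.sum_add_distrib, sum_mul_endpointCoeff hk, sum_mul_endpointCoeff hk, omegaSum_zero,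
      ← omegaSum_pred_add (Nat.zero_lt_of_lt hk)]
    simpa [derivative_X_pow, mul_comm] using (exact_on_X_pow m hm).symm

theorem newest_ratio_le_oldest_ratio_iff {x h : ℝ} (hx : 0 < x) (hh : 0 < h) :
    (x - 2 * h) / (h * x) ≤ (3 * x + 2 * h) / (x * (x + h)) ↔ x ≤ 2 * (1 + √2) * h := by
  have sqrt_two_sq : √2 ^ 2 = 2 := Real.sq_sqrt zero_le_two
  have one_lt_sqrt_two : 1 < √2 := Real.lt_sqrt_of_sq_lt (by norm_num)
  have other_factor_pos : 0 < x + 2 * (√2 - 1) * h :=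
    add_pos hx (mul_pos (mul_pos two_pos (sub_pos.mpr one_lt_sqrt_two)) hh)
  have factorization : (3 * x + 2 * h) / (x * (x + h)) - (x - 2 * h) / (h * x) =
      (2 * (1 + √2) * h - x) * ((x + 2 * (√2 - 1) * h) / (h * x * (x + h))) := by
    field_simp
    linear_combination -4 * h ^ 2 * sqrt_two_sq
  rw [← sub_nonneg, factorization,
    mul_nonneg_iff_of_pos_right (div_pos other_factor_pos (by positivity)), sub_nonneg]

theorem third_order_formula_ssp_coefficient_general
    {k : ℕ} {ω : ℕ → ℝ} {Ω h : ℝ} (hΩ : OmegaSum ω (k - 1) = Ω) (hωk : ω k = h)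
    (h_pos : 0 < h) (hΩ2 : 2 * h ≤ Ω) {α β : ℕ → ℝ}
    (hα : α = endpointCoeff k
      (h ^ 2 * (3 * Ω + 2 * h) / Ω ^ 3) ((Ω + h) ^ 2 * (Ω - 2 * h) / Ω ^ 3))
    (hβ : β = endpointCoeff k (h ^ 2 * (Ω + h) / Ω ^ 2) (h * (Ω + h) ^ 2 / Ω ^ 2)) :
    ((∀ j < k, 0 ≤ α j) ∧ (∀ j < k, 0 ≤ β j) ∧ OrderCond k 3 ω 0 α β) ∧
    (Ω ≤ 2 * (1 + √2) * h →
      min (α (k - 1) / β (k - 1)) (α 0 / β 0) = (Ω - 2 * h) / (h * Ω)) ∧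
    (2 * (1 + √2) * h < Ω →
      min (α (k - 1) / β (k - 1)) (α 0 / β 0) = (3 * Ω + 2 * h) / (Ω * (Ω + h))) := by
  have Ω_pos : 0 < Ω := by linarith
  have hk : 1 < k := one_lt_of_omegaSum_pred_ne_zero (hΩ.trans_ne Ω_pos.ne')
  have newest_ratio : α (k - 1) / β (k - 1) = (Ω - 2 * h) / (h * Ω) := by
    rw [hα, hβ, endpointCoeff_pred, endpointCoeff_pred]
    field_simp
  have oldest_ratio : α 0 / β 0 = (3 * Ω + 2 * h) / (Ω * (Ω + h)) := by
    rw [hα, hβ, endpointCoeff_zero hk, endpointCoeff_zero hk]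
    field_simp
  have crossover := newest_ratio_le_oldest_ratio_iff Ω_pos h_pos
  rw [newest_ratio, oldest_ratio]
  refine ⟨⟨?_, ?_, ?_⟩, fun hle => min_eq_left (crossover.mpr hle),
    fun hlt => min_eq_right (le_of_not_ge (mt crossover.mp hlt.not_ge))⟩
  · have newest_nonneg : 0 ≤ (Ω + h) ^ 2 * (Ω - 2 * h) / Ω ^ 3 :=
      div_nonneg (mul_nonneg (sq_nonneg _) (sub_nonneg.mpr hΩ2)) (by positivity)
    exact fun j _ => hα ▸ endpointCoeff_nonneg (by positivity) newest_nonneg k j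
  · exact fun j _ => hβ ▸ endpointCoeff_nonneg (by positivity) (by positivity) k j
  · exact hα ▸ hβ ▸ orderCond_three_cubic_hermite hΩ hωk Ω_pos.ne'

/-- **The family of third-order formulae \eqref{VSSSSPLMMk3} and its SSP coefficient.**
With `Ω = Ω_{k−1} ≥ 2` and `ω_k = 1`, the coefficients
`α_{k−1} = (Ω+1)²(Ω−2)/Ω³`, `β_{k−1} = (Ω+1)²/Ω²`, `α₀ = (3Ω+2)/Ω³`, `β₀ = (Ω+1)/Ω²`
(all other entries zero) are nonnegative and satisfy the third-order conditions, and
the SSP coefficient `min(α_{k−1}/β_{k−1}, α₀/β₀)` equals `(Ω−2)/Ω` for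
`2 ≤ Ω ≤ 2(1+√2)` and `(3Ω+2)/(Ω(Ω+1))` for `Ω > 2(1+√2)`. -/
theorem third_order_formula_ssp_coefficient
    (k : ℕ) (hk : 2 ≤ k)
    (ω : ℕ → ℝ) (hω : ∀ i, 1 ≤ i → i ≤ k → 0 < ω i) (hωk : ω k = 1)
    (Ω : ℝ) (hΩ : Ω = OmegaSum ω (k - 1)) (hΩ2 : 2 ≤ Ω)
    (α β : ℕ → ℝ)
    (hαdef : α = fun j => if j = k - 1 then (Ω + 1) ^ 2 * (Ω - 2) / Ω ^ 3
      else if j = 0 then (3 * Ω + 2) / Ω ^ 3 else 0)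
    (hβdef : β = fun j => if j = k - 1 then (Ω + 1) ^ 2 / Ω ^ 2
      else if j = 0 then (Ω + 1) / Ω ^ 2 else 0) :
    ((∀ j < k, 0 ≤ α j) ∧ (∀ j < k, 0 ≤ β j) ∧
      (∑ j ∈ Finset.range k, α j) = 1 ∧
      (∀ m : ℕ, 1 ≤ m → m ≤ 3 →
        (∑ j ∈ Finset.range k,
            ((OmegaSum ω j) ^ m * α j + (m : ℝ) * (OmegaSum ω j) ^ (m - 1) * β j))
          = (OmegaSum ω k) ^ m)) ∧
    (Ω ≤ 2 * (1 + Real.sqrt 2) →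
      min (α (k - 1) / β (k - 1)) (α 0 / β 0) = (Ω - 2) / Ω) ∧
    (2 * (1 + Real.sqrt 2) < Ω →
      min (α (k - 1) / β (k - 1)) (α 0 / β 0) = (3 * Ω + 2) / (Ω * (Ω + 1))) := by
  simpa only [OrderCond, zero_mul, add_zero, mul_one, one_mul] using
    third_order_formula_ssp_coefficient_general hΩ.symm hωk one_pos (by simpa using hΩ2)
      (by simpa [endpointCoeff, funext_iff] using hαdef)
      (by simpa [endpointCoeff, funext_iff] using hβdef)
end

section
/- Fix an integer k ≥ 3 and real numbers 0 < μ⁻ ≤ μ⁺. Let (μ_n)_{n ≥ k} be a sequence with μ⁻ ≤ μ_n ≤ μ⁺ for all n, let h₁, …, h_{k−1} be positive reals, and define recursively for n ≥ k: h_n = S_n · μ_n / (S_n + μ_n), where S_n = Σ_{j=1}^{k−1} h_{n−j}. Then ((k−2)/(k−1))·μ⁻ ≤ liminf_{n→∞} h_n ≤ limsup_{n→∞} h_n ≤ ((k−2)/(k−1))·μ⁺. In particular, if μ_n is constantly equal to μ > 0, then h_n → ((k−2)/(k−1))·μ as n → ∞. -/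
/-!
Write `m = k - 1`. For fixed `μ`, the map `f_μ a = m a μ / (m a + μ)` sends a constant window of
step sizes to the next one; on `a > 0` its graph lies above the diagonal for `a < (m - 1) / m * μ`
and below it for `a > (m - 1) / m * μ`. Since the step is monotone in the window and in the bound,
passing to the limit in the recursion gives `f_μ⁻ (liminf h) ≤ liminf h` and
`limsup h ≤ f_μ⁺ (limsup h)`, and comparing with the diagonal yields both bounds. This requires
`liminf h > 0` when `(m - 1) / m * μ⁻ > 0`: a small enough positive lower bound for an initial
segment of `h` lies below the fixed point of `f_μ⁻`, and is therefore preserved by the recursion.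
-/

open Filter Topology Finset

section Window

lemma eventually_forall_sub {p : ℕ → Prop} (hp : ∀ᶠ n in atTop, p n) (s : Finset ℕ) :
    ∀ᶠ n in atTop, ∀ j ∈ s, p (n - j) :=
  (eventually_all_finset s).2 fun j _ ↦ (tendsto_sub_atTop_nat j).eventually hp

variable {α : Type*} [ConditionallyCompleteLinearOrder α] [TopologicalSpace α] [OrderTopology α]
  [DenselyOrdered α] {f : α → α} {u : ℕ → α} {s : Finset ℕ}

theorem map_liminf_le_liminf_of_window [NoMinOrder α]
    (hbdd : atTop.IsBoundedUnder (· ≥ ·) u) (hcobdd : atTop.IsCoboundedUnder (· ≥ ·) u)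
    (hf : ContinuousAt f (liminf u atTop))
    (hstep : ∀ᶠ a in 𝓝 (liminf u atTop), ∀ᶠ n in atTop, (∀ j ∈ s, a ≤ u (n - j)) → f a ≤ u n) :
    f (liminf u atTop) ≤ liminf u atTop := by
  refine le_of_tendsto (hf.mono_left (nhdsWithin_le_nhds (s := Set.Iio (liminf u atTop)))) ?_
  filter_upwards [nhdsWithin_le_nhds hstep, self_mem_nhdsWithin] with a hstep_a ha
  have hwindow := eventually_forall_sub (eventually_lt_of_lt_liminf ha hbdd) s
  refine le_liminf_of_le hcobdd ?_
  filter_upwards [hstep_a, hwindow] with n hstep_n hn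
  exact hstep_n fun j hj ↦ (hn j hj).le

theorem limsup_le_map_limsup_of_window [NoMaxOrder α]
    (hbdd : atTop.IsBoundedUnder (· ≤ ·) u) (hcobdd : atTop.IsCoboundedUnder (· ≤ ·) u)
    (hf : ContinuousAt f (limsup u atTop))
    (hstep : ∀ᶠ a in 𝓝 (limsup u atTop), ∀ᶠ n in atTop, (∀ j ∈ s, u (n - j) ≤ a) → u n ≤ f a) :
    limsup u atTop ≤ f (limsup u atTop) :=
  map_liminf_le_liminf_of_window (α := αᵒᵈ) hbdd hcobdd hf hstep

end Window

section GreedyStep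

variable {K : Type*} [Field K]

/-- The greedy step size `s μ / (s + μ)` allowed by a sum `s` of previous step sizes and a forward
Euler bound `μ`. Meaningful for `s + μ ≠ 0`; the value is `0` otherwise. -/
def greedyStep (s μ : K) : K := s * μ / (s + μ)

variable [LinearOrder K] [IsStrictOrderedRing K] {m a s t μ ν : K}

lemma greedyStep_pos (hs : 0 < s) (hμ : 0 < μ) : 0 < greedyStep s μ := by
  unfold greedyStep
  positivity

lemma greedyStep_le_right (hs : 0 < s) (hμ : 0 < μ) : greedyStep s μ ≤ μ := by
  rw [greedyStep, div_le_iff₀ (by positivity)]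
  linarith [mul_pos hμ hμ]

lemma greedyStep_le_greedyStep (hs : 0 < s) (hμ : 0 < μ) (hst : s ≤ t) (hμν : μ ≤ ν) :
    greedyStep s μ ≤ greedyStep t ν := by
  have ht : 0 < t := hs.trans_le hst
  have hν : 0 < ν := hμ.trans_le hμν
  rw [greedyStep, greedyStep, div_le_div_iff₀ (by positivity) (by positivity)]
  calc s * μ * (t + ν) = s * t * μ + μ * ν * s := by ring
    _ ≤ s * t * ν + μ * ν * t := by gcongr
    _ = t * ν * (s + μ) := by ring

lemma le_greedyStep_mul_self_iff (hm : 0 < m) (ha : 0 < a) (hμ : 0 < μ) :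
    a ≤ greedyStep (m * a) μ ↔ a ≤ (m - 1) / m * μ := by
  rw [greedyStep, le_div_iff₀ (by positivity), mul_comm m a, mul_assoc a m μ,
    mul_le_mul_iff_right₀ ha, div_mul_eq_mul_div, le_div_iff₀ hm, sub_one_mul, le_sub_iff_add_le]

lemma greedyStep_mul_self_le_iff (hm : 0 < m) (ha : 0 < a) (hμ : 0 < μ) :
    greedyStep (m * a) μ ≤ a ↔ (m - 1) / m * μ ≤ a := by
  rw [greedyStep, div_le_iff₀ (by positivity), mul_comm m a, mul_assoc a m μ,
    mul_le_mul_iff_right₀ ha, div_mul_eq_mul_div, div_le_iff₀ hm, sub_one_mul, sub_le_iff_le_add]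

end GreedyStep

lemma continuousAt_greedyStep_mul {m a μ : ℝ} (hm : 0 < m) (ha : 0 < a) (hμ : 0 < μ) :
    ContinuousAt (fun x ↦ greedyStep (m * x) μ) a := by
  unfold greedyStep
  fun_prop (disch := positivity)

/-- Positive step sizes `h₁, h₂, …` produced by the greedy recursion of the `k`-step method with
`k = m + 1`: from index `k` on, `h n` is the greedy step for the sum of its `m` predecessors and the
bound `μ n`. The values `h 0` and `μ 0, …, μ m` are irrelevant. -/
structure IsGreedyStepSequence (m : ℕ) (μ h : ℕ → ℝ) : Prop where
  window_pos : 0 < m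
  bound_pos : ∀ n, m < n → 0 < μ n
  initial_pos : ∀ j, 1 ≤ j → j ≤ m → 0 < h j
  eq_greedyStep : ∀ n, m < n → h n = greedyStep (∑ j ∈ Icc 1 m, h (n - j)) (μ n)

namespace IsGreedyStepSequence

variable {m n : ℕ} {μ h : ℕ → ℝ} {a b μ₀ : ℝ}

lemma sum_pos (hh : IsGreedyStepSequence m μ h) (hprev : ∀ j ∈ Icc 1 m, 0 < h (n - j)) :
    0 < ∑ j ∈ Icc 1 m, h (n - j) :=
  Finset.sum_pos hprev (nonempty_Icc.2 hh.window_pos)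

lemma pos (hh : IsGreedyStepSequence m μ h) (hn : 1 ≤ n) : 0 < h n := by
  induction n using Nat.strong_induction_on with
  | _ n ih =>
    rcases le_or_gt n m with hnm | hmn
    · exact hh.initial_pos n hn hnm
    · rw [hh.eq_greedyStep n hmn]
      refine greedyStep_pos (hh.sum_pos fun j hj ↦ ?_) (hh.bound_pos n hmn)
      rw [mem_Icc] at hj
      exact ih (n - j) (by lia) (by lia)

lemma pos_of_mem_window (hh : IsGreedyStepSequence m μ h) (hmn : m < n) :
    ∀ j ∈ Icc 1 m, 0 < h (n - j) := fun j hj ↦ by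
  rw [mem_Icc] at hj
  exact hh.pos (by lia)

lemma le_bound (hh : IsGreedyStepSequence m μ h) (hmn : m < n) : h n ≤ μ n := by
  rw [hh.eq_greedyStep n hmn]
  exact greedyStep_le_right (hh.sum_pos (hh.pos_of_mem_window hmn)) (hh.bound_pos n hmn)

lemma greedyStep_le (hh : IsGreedyStepSequence m μ h) (hmn : m < n) (ha : 0 < a) (hb : 0 < b)
    (hμ : b ≤ μ n) (hwindow : ∀ j ∈ Icc 1 m, a ≤ h (n - j)) : greedyStep (m * a) b ≤ h n := by
  have hm : (0 : ℝ) < m := Nat.cast_pos.2 hh.window_pos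
  have hsum : m * a ≤ ∑ j ∈ Icc 1 m, h (n - j) := by
    simpa using card_nsmul_le_sum _ _ a hwindow
  rw [hh.eq_greedyStep n hmn]
  exact greedyStep_le_greedyStep (by positivity) hb hsum hμ

lemma le_greedyStep (hh : IsGreedyStepSequence m μ h) (hmn : m < n) (hμ : μ n ≤ b)
    (hwindow : ∀ j ∈ Icc 1 m, h (n - j) ≤ a) : h n ≤ greedyStep (m * a) b := by
  have hsum : ∑ j ∈ Icc 1 m, h (n - j) ≤ m * a := by
    simpa using sum_le_card_nsmul _ _ a hwindow
  rw [hh.eq_greedyStep n hmn]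
  exact greedyStep_le_greedyStep (hh.sum_pos (hh.pos_of_mem_window hmn)) (hh.bound_pos n hmn)
    hsum hμ

lemma eventually_nonneg (hh : IsGreedyStepSequence m μ h) : ∀ᶠ n in atTop, 0 ≤ h n :=
  (eventually_ge_atTop 1).mono fun _ hn ↦ (hh.pos hn).le

lemma eventually_le (hh : IsGreedyStepSequence m μ h) (hμ : ∀ᶠ n in atTop, μ n ≤ b) :
    ∀ᶠ n in atTop, h n ≤ b := by
  filter_upwards [hμ, eventually_gt_atTop m] with n hn hmn
  exact (hh.le_bound hmn).trans hn

lemma isBoundedUnder_ge (hh : IsGreedyStepSequence m μ h) : atTop.IsBoundedUnder (· ≥ ·) h :=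
  isBoundedUnder_of_eventually_ge hh.eventually_nonneg

lemma isBoundedUnder_le (hh : IsGreedyStepSequence m μ h)
    (hμ : atTop.IsBoundedUnder (· ≤ ·) μ) : atTop.IsBoundedUnder (· ≤ ·) h :=
  let ⟨_, hB⟩ := hμ.eventually_le
  isBoundedUnder_of_eventually_le (hh.eventually_le hB)

lemma exists_pos_eventually_le (hh : IsGreedyStepSequence m μ h) (hb : 0 < b)
    (hfix : 0 < ((m : ℝ) - 1) / m * b) (hμ : ∀ᶠ n in atTop, b ≤ μ n) :
    ∃ c, 0 < c ∧ ∀ᶠ n in atTop, c ≤ h n := by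
  have hm : (0 : ℝ) < m := Nat.cast_pos.2 hh.window_pos
  obtain ⟨N, hN⟩ := eventually_atTop.1 (hμ.and (eventually_gt_atTop m))
  have hsmall : ∀ᶠ c in 𝓝 (0 : ℝ), c ≤ ((m : ℝ) - 1) / m * b ∧ ∀ i ∈ Icc 1 N, c ≤ h i :=
    (eventually_le_nhds hfix).and <| (eventually_all_finset _).2 fun i hi ↦
      eventually_le_nhds (hh.pos (mem_Icc.1 hi).1)
  obtain ⟨c, hc, hc_fix, hc_init⟩ := hsmall.exists_gt
  have hle : ∀ n, 1 ≤ n → c ≤ h n := fun n hn ↦ by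
    induction n using Nat.strong_induction_on with
    | _ n ih =>
      rcases le_or_gt n N with hnN | hNn
      · exact hc_init n (mem_Icc.2 ⟨hn, hnN⟩)
      · obtain ⟨hbn, hmn⟩ := hN n hNn.le
        refine ((le_greedyStep_mul_self_iff hm hc hb).2 hc_fix).trans
          (hh.greedyStep_le hmn hc hb hbn fun j hj ↦ ?_)
        rw [mem_Icc] at hj
        exact ih (n - j) (by lia) (by lia)
  exact ⟨c, hc, (eventually_ge_atTop 1).mono hle⟩

theorem mul_le_liminf (hh : IsGreedyStepSequence m μ h) (hbdd : atTop.IsBoundedUnder (· ≤ ·) μ)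
    (hμ : ∀ᶠ n in atTop, b ≤ μ n) : ((m : ℝ) - 1) / m * b ≤ liminf h atTop := by
  have hm : (1 : ℝ) ≤ m := Nat.one_le_cast.2 hh.window_pos
  have hcobdd := (hh.isBoundedUnder_le hbdd).isCoboundedUnder_ge
  rcases le_or_gt (((m : ℝ) - 1) / m * b) 0 with hfix | hfix
  · exact hfix.trans (le_liminf_of_le hcobdd hh.eventually_nonneg)
  have hb : 0 < b := pos_of_mul_pos_right hfix (div_nonneg (by linarith) (by linarith))
  obtain ⟨c, hc, hch⟩ := hh.exists_pos_eventually_le hb hfix hμ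
  have hL : 0 < liminf h atTop := hc.trans_le (le_liminf_of_le hcobdd hch)
  refine (greedyStep_mul_self_le_iff (by linarith) hL hb).1 <|
    map_liminf_le_liminf_of_window (s := Icc 1 m) hh.isBoundedUnder_ge hcobdd
      (continuousAt_greedyStep_mul (by linarith) hL hb) ?_
  filter_upwards [eventually_gt_nhds hL] with a ha
  filter_upwards [hμ, eventually_gt_atTop m] with n hbn hmn
  exact hh.greedyStep_le hmn ha hb hbn

theorem limsup_le_mul (hh : IsGreedyStepSequence m μ h) (hμ : ∀ᶠ n in atTop, μ n ≤ b) :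
    limsup h atTop ≤ ((m : ℝ) - 1) / m * b := by
  have hm : (1 : ℝ) ≤ m := Nat.one_le_cast.2 hh.window_pos
  obtain ⟨n, hbn, hmn⟩ := (hμ.and (eventually_gt_atTop m)).exists
  have hb : 0 < b := (hh.bound_pos n hmn).trans_le hbn
  rcases le_or_gt (limsup h atTop) 0 with hU | hU
  · exact hU.trans (mul_nonneg (div_nonneg (by linarith) (by linarith)) hb.le)
  refine (le_greedyStep_mul_self_iff (by linarith) hU hb).1 <|
    limsup_le_map_limsup_of_window (s := Icc 1 m)
      (hh.isBoundedUnder_le (isBoundedUnder_of_eventually_le hμ))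
      hh.isBoundedUnder_ge.isCoboundedUnder_le
      (continuousAt_greedyStep_mul (by linarith) hU hb) (.of_forall fun a ↦ ?_)
  filter_upwards [hμ, eventually_gt_atTop m] with n hbn hmn
  exact hh.le_greedyStep hmn hbn

theorem tendsto (hh : IsGreedyStepSequence m μ h) (hμ : Tendsto μ atTop (𝓝 μ₀)) :
    Tendsto h atTop (𝓝 (((m : ℝ) - 1) / m * μ₀)) := by
  have hbdd := hμ.isBoundedUnder_le
  have hcont : Tendsto (((m : ℝ) - 1) / m * ·) (𝓝 μ₀) (𝓝 (((m : ℝ) - 1) / m * μ₀)) :=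
    tendsto_id.const_mul _
  have hliminf : ((m : ℝ) - 1) / m * μ₀ ≤ liminf h atTop :=
    le_of_tendsto (hcont.mono_left (nhdsWithin_le_nhds (s := Set.Iio μ₀))) <|
      eventually_mem_nhdsWithin.mono fun _ hb ↦
        hh.mul_le_liminf hbdd (hμ.eventually_const_le hb)
  have hlimsup : limsup h atTop ≤ ((m : ℝ) - 1) / m * μ₀ :=
    ge_of_tendsto (hcont.mono_left (nhdsWithin_le_nhds (s := Set.Ioi μ₀))) <|
      eventually_mem_nhdsWithin.mono fun _ hb ↦
        hh.limsup_le_mul (hμ.eventually_le_const hb)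
  exact tendsto_of_le_liminf_of_limsup_le hliminf hlimsup (hh.isBoundedUnder_le hbdd)
    hh.isBoundedUnder_ge

end IsGreedyStepSequence

theorem second_order_greedy_step_size_asymptotics_general
    (k : ℕ) (hk : 2 ≤ k) (μm μp : ℝ) (μ : ℕ → ℝ) (hμ_pos : ∀ n, k ≤ n → 0 < μ n)
    (hμ : ∀ᶠ n in atTop, μm ≤ μ n ∧ μ n ≤ μp)
    (h : ℕ → ℝ) (hpos : ∀ j, 1 ≤ j → j ≤ k - 1 → 0 < h j)
    (hrec : ∀ n, k ≤ n →
      h n = (∑ j ∈ Icc 1 (k - 1), h (n - j)) * μ n / ((∑ j ∈ Icc 1 (k - 1), h (n - j)) + μ n)) :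
    ((k : ℝ) - 2) / ((k : ℝ) - 1) * μm ≤ liminf h atTop ∧
    liminf h atTop ≤ limsup h atTop ∧
    limsup h atTop ≤ ((k : ℝ) - 2) / ((k : ℝ) - 1) * μp ∧
    ∀ μ₀, Tendsto μ atTop (𝓝 μ₀) →
      Tendsto h atTop (𝓝 (((k : ℝ) - 2) / ((k : ℝ) - 1) * μ₀)) := by
  obtain ⟨m, rfl⟩ : ∃ m, k = m + 1 := ⟨k - 1, by lia⟩
  have hh : IsGreedyStepSequence m μ h := ⟨by lia, hμ_pos, hpos, hrec⟩
  have hratio : (((m + 1 : ℕ) : ℝ) - 2) / (((m + 1 : ℕ) : ℝ) - 1) = ((m : ℝ) - 1) / m := by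
    push_cast
    ring
  have hbdd : atTop.IsBoundedUnder (· ≤ ·) μ :=
    isBoundedUnder_of_eventually_le (hμ.mono fun _ hn ↦ hn.2)
  rw [hratio]
  exact ⟨hh.mul_le_liminf hbdd (hμ.mono fun _ hn ↦ hn.1),
    liminf_le_limsup (hh.isBoundedUnder_le hbdd) hh.isBoundedUnder_ge,
    hh.limsup_le_mul (hμ.mono fun _ hn ↦ hn.2), fun _ ↦ hh.tendsto⟩

/-- **Asymptotic behavior of the greedy step size for the second-order methods.**
For the recursion `h_n = S_n μ_n / (S_n + μ_n)` with `S_n = Σ_{j=1}^{k−1} h_{n−j}` and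
`μ⁻ ≤ μ_n ≤ μ⁺`, the step sizes satisfy
`((k−2)/(k−1))·μ⁻ ≤ liminf h_n ≤ limsup h_n ≤ ((k−2)/(k−1))·μ⁺`; in particular, if
`μ_n` is constantly `μ > 0` then `h_n → ((k−2)/(k−1))·μ`. -/
theorem second_order_greedy_step_size_asymptotics
    (k : ℕ) (hk : 3 ≤ k)
    (μm μp : ℝ) (hμm : 0 < μm) (hμmp : μm ≤ μp)
    (μ : ℕ → ℝ) (hμ : ∀ n, k ≤ n → μm ≤ μ n ∧ μ n ≤ μp)
    (h : ℕ → ℝ) (hpos : ∀ j, 1 ≤ j → j ≤ k - 1 → 0 < h j)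
    (hrec : ∀ n, k ≤ n →
      h n = (∑ j ∈ Finset.Icc 1 (k - 1), h (n - j)) * μ n
        / ((∑ j ∈ Finset.Icc 1 (k - 1), h (n - j)) + μ n)) :
    (((k : ℝ) - 2) / ((k : ℝ) - 1)) * μm ≤ Filter.liminf h Filter.atTop ∧
    Filter.liminf h Filter.atTop ≤ Filter.limsup h Filter.atTop ∧
    Filter.limsup h Filter.atTop ≤ (((k : ℝ) - 2) / ((k : ℝ) - 1)) * μp ∧
    (∀ μ₀ : ℝ, 0 < μ₀ → (∀ n, k ≤ n → μ n = μ₀) →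
      Filter.Tendsto h Filter.atTop (nhds ((((k : ℝ) - 2) / ((k : ℝ) - 1)) * μ₀))) := by
  obtain ⟨hliminf, hle, hlimsup, hlim⟩ := second_order_greedy_step_size_asymptotics_general
    k (by lia) μm μp μ (fun n hn ↦ hμm.trans_le (hμ n hn).1) (eventually_atTop.2 ⟨k, hμ⟩)
    h hpos hrec
  exact ⟨hliminf, hle, hlimsup, fun μ₀ _ hμ₀ ↦
    hlim μ₀ (tendsto_atTop_of_eventually_const hμ₀)⟩
end

section
/- Let r > 0 be real, and let p and k be positive integers with given positive step-size ratios ω₁, …, ω_k. Then exactly one of the following two statements holds: (i) there exist nonnegative vectors δ, β satisfying the order-p conditions with parameter r (i.e., there is a k-step formula of order p with SSP coefficient at least r); (ii) there exists a real polynomial q of degree at most p such that q(Ω_j) ≥ 0 for all 0 ≤ j ≤ k−1, q'(Ω_j) + r·q(Ω_j) ≥ 0 for all 0 ≤ j ≤ k−1, and q(Ω_k) < 0. -/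
/-!
The order-`p` conditions are the instances `q = X ^ m`, `m ≤ p`, of
`q (Ω_k) = ∑ j < k, (δ_j q (Ω_j) + β_j (q' (Ω_j) + r q (Ω_j)))`, so by linearity they say that on
polynomials of degree at most `p`, evaluation at `Ω_k` is a nonnegative combination of the `2k`
functionals `q ↦ q (Ω_j)` and `q ↦ q' (Ω_j) + r q (Ω_j)`. By Farkas' lemma such a combination exists
if and only if no polynomial makes all of these functionals nonnegative and `q (Ω_k)` negative.

Farkas' lemma for finitely many linear functionals needs neither a topology nor finite dimension:
following Bartl, it is proved by induction on the number of functionals. If nonnegativity of the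
functionals other than `a` does not suffice to make `ψ` nonnegative, then they are nonnegative at
some `x` with `a x = -1` and `ψ x < 0`, and projecting along `x` onto the kernel of `a` eliminates
`a`.
-/

open Polynomial

section Farkas

section OrderedRing

variable {R M : Type*} [CommRing R] [PartialOrder R] [IsOrderedRing R] [AddCommGroup M] [Module R M]

theorem dual_eq_zero_of_forall_nonneg {ψ : Module.Dual R M} (h : ∀ v, 0 ≤ ψ v) : ψ = 0 := by
  ext v
  exact le_antisymm (by simpa using h (-v)) (h v)

theorem apply_nonneg_of_mem_hull {S : Set (Module.Dual R M)} {χ : Module.Dual R M} {v : M}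
    (hχ : χ ∈ PointedCone.hull R S) (hv : v ∈ PointedCone.dual .id S) : 0 ≤ χ v := by
  rw [← PointedCone.dual_hull] at hv
  exact hv hχ

end OrderedRing

variable {K V ι : Type*} [Field K] [LinearOrder K] [IsStrictOrderedRing K]
  [AddCommGroup V] [Module K V]

theorem exists_mem_apply_eq_neg_one_and_neg {C : PointedCone K V} {φ ψ : Module.Dual K V}
    (hφψ : ∀ v ∈ C, 0 ≤ φ v → 0 ≤ ψ v) (hψ : ∃ v ∈ C, ψ v < 0) :
    ∃ x ∈ C, φ x = -1 ∧ ψ x < 0 := by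
  obtain ⟨v, hvC, hψv⟩ := hψ
  have hφv : φ v < 0 := lt_of_not_ge fun hφv ↦ (hφψ v hvC hφv).not_gt hψv
  have hscale : 0 < -(φ v)⁻¹ := neg_pos.2 (inv_lt_zero.2 hφv)
  refine ⟨-(φ v)⁻¹ • v, C.smul_mem hscale.le hvC, by simp [hφv.ne], ?_⟩
  rw [map_smul]
  exact smul_neg_of_pos_of_neg hscale hψv

theorem mem_hull_image_of_forall_nonneg {s : Finset ι} {φ : ι → Module.Dual K V}
    {ψ : Module.Dual K V} (h : ∀ v, (∀ i ∈ s, 0 ≤ φ i v) → 0 ≤ ψ v) :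
    ψ ∈ PointedCone.hull K (φ '' s) := by
  classical
  induction s using Finset.induction_on generalizing φ ψ with
  | empty => simp [dual_eq_zero_of_forall_nonneg (by simpa using h)]
  | insert a s _ ih =>
    simp only [Finset.forall_mem_insert, and_imp] at h
    rw [Finset.coe_insert, Set.image_insert_eq, Submodule.mem_span_insert]
    by_cases hs : ∀ v, (∀ i ∈ s, 0 ≤ φ i v) → 0 ≤ ψ v
    · exact ⟨0, ψ, ih hs, by simp⟩
    obtain ⟨x, hφx, hax, hψx⟩ : ∃ x ∈ PointedCone.dual .id (φ '' s), φ a x = -1 ∧ ψ x < 0 :=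
      exists_mem_apply_eq_neg_one_and_neg (fun v hv hav ↦ h v hav (by simpa using hv))
        (by simpa using hs)
    let P : V →ₗ[K] V := .id + (φ a).smulRight x
    have dualMap_P (χ : Module.Dual K V) : P.dualMap χ = χ + χ x • φ a := by
      ext v
      simp [P, mul_comm]
    have apply_P_eq_zero (v : V) : φ a (P v) = 0 := by simp [P, hax]
    obtain ⟨χ, hχ, hχψ⟩ : P.dualMap ψ ∈ (PointedCone.hull K (φ '' s)).map P.dualMap := by
      rw [PointedCone.map, Submodule.map_span, ← Set.image_comp]
      exact ih fun v hv ↦ h (P v) (apply_P_eq_zero v).ge hv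
    have hχx : 0 ≤ χ x := apply_nonneg_of_mem_hull hχ hφx
    refine ⟨⟨χ x - ψ x, sub_nonneg.2 (hψx.le.trans hχx)⟩, χ, hχ, ?_⟩
    have hχψ' : χ + χ x • φ a = ψ + ψ x • φ a := by rwa [← dualMap_P, ← dualMap_P]
    rw [Nonneg.mk_smul, sub_smul, sub_add_eq_add_sub, eq_sub_iff_add_eq, ← hχψ', add_comm]

theorem exists_nonneg_eqOn_sum_smul_iff (W : Submodule K V) (s : Finset ι)
    (φ : ι → Module.Dual K V) (ψ : Module.Dual K V) :
    (∃ c : ι → K, (∀ i ∈ s, 0 ≤ c i) ∧ Set.EqOn ψ (∑ i ∈ s, c i • φ i : Module.Dual K V) W) ↔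
      ∀ v ∈ W, (∀ i ∈ s, 0 ≤ φ i v) → 0 ≤ ψ v := by
  constructor
  · rintro ⟨c, hc, hψ⟩ v hv hφ
    rw [hψ hv, LinearMap.sum_apply]
    exact Finset.sum_nonneg fun i hi ↦ smul_nonneg (hc i hi) (hφ i hi)
  · intro h
    have hψ : ψ.domRestrict W ∈ PointedCone.hull K ((fun i ↦ (φ i).domRestrict W) '' s) :=
      mem_hull_image_of_forall_nonneg fun v ↦ h v v.2
    obtain ⟨c, hc, hsum⟩ : ∃ c : ι → K, (∀ i ∈ s, 0 ≤ c i) ∧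
        ∑ i ∈ s, c i • (φ i).domRestrict W = ψ.domRestrict W := by
      obtain ⟨c, hsum⟩ := (Submodule.mem_span_image_finset_iff_exists_fun' _).1 hψ
      exact ⟨fun i ↦ c i, fun i _ ↦ (c i).2, hsum⟩
    exact ⟨c, hc, fun v hv ↦ by simpa using (LinearMap.congr_fun hsum ⟨v, hv⟩).symm⟩

end Farkas

theorem eqOn_degreeLE_iff {R M : Type*} [Semiring R] [AddCommMonoid M] [Module R M]
    {f g : R[X] →ₗ[R] M} {p : ℕ} :
    Set.EqOn f g (degreeLE R p) ↔ ∀ m ≤ p, f (X ^ m) = g (X ^ m) := by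
  classical
  rw [degreeLE_eq_span_X_pow, LinearMap.eqOn_span_iff]
  simp [Set.EqOn]

/-- The linear functional `q ↦ q' (x) + r q (x)` on polynomials, which the coefficient `β` of a
formula multiplies at the node `x`. -/
noncomputable def derivAddEval {R : Type*} [CommSemiring R] (r x : R) : R[X] →ₗ[R] R :=
  leval x ∘ₗ derivative + r • leval x

theorem derivAddEval_apply {R : Type*} [CommSemiring R] (r x : R) (q : R[X]) :
    derivAddEval r x q = (derivative q).eval x + r * q.eval x :=
  rfl

theorem orderCond_iff_eqOn (k p : ℕ) (ω : ℕ → ℝ) (r : ℝ) (δ β : ℕ → ℝ) :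
    OrderCond k p ω r δ β ↔
      Set.EqOn (leval (OmegaSum ω k))
        (∑ j ∈ Finset.range k,
          (δ j • leval (OmegaSum ω j) + β j • derivAddEval r (OmegaSum ω j)) : ℝ[X] →ₗ[ℝ] ℝ)
        (degreeLE ℝ p) := by
  have moment_eq (x d b : ℝ) (m : ℕ) :
      (d • leval x + b • derivAddEval r x) (X ^ m) =
        x ^ m * (d + r * b) + m * x ^ (m - 1) * b := by
    simp only [LinearMap.add_apply, LinearMap.smul_apply, smul_eq_mul, leval_apply,
      derivAddEval_apply, derivative_X_pow, eval_mul, eval_pow, eval_X, eval_C]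
    ring
  rw [eqOn_degreeLE_iff]
  simp only [LinearMap.sum_apply, moment_eq, leval_apply, eval_pow, eval_X]
  constructor
  · rintro ⟨hzero, hpos⟩ m hm
    obtain rfl | hm₀ := m.eq_zero_or_pos
    · simpa using hzero.symm
    · exact (hpos m hm₀ hm).symm
  · exact fun h ↦ ⟨by simpa using (h 0 p.zero_le).symm, fun m _ hm ↦ (h m hm).symm⟩

theorem exists_orderCond_iff (k p : ℕ) (ω : ℕ → ℝ) (r : ℝ) :
    (∃ δ β : ℕ → ℝ, (∀ j < k, 0 ≤ δ j) ∧ (∀ j < k, 0 ≤ β j) ∧ OrderCond k p ω r δ β) ↔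
      ∀ q : ℝ[X], q.natDegree ≤ p →
        (∀ j < k, 0 ≤ q.eval (OmegaSum ω j)) →
        (∀ j < k, 0 ≤ (derivative q).eval (OmegaSum ω j) + r * q.eval (OmegaSum ω j)) →
        0 ≤ q.eval (OmegaSum ω k) := by
  have farkas := exists_nonneg_eqOn_sum_smul_iff (degreeLE ℝ p)
    ((Finset.range k).disjSum (Finset.range k))
    (Sum.elim (fun j ↦ leval (OmegaSum ω j)) fun j ↦ derivAddEval r (OmegaSum ω j))
    (leval (OmegaSum ω k))
  refine .trans ?_ (farkas.trans ?_)
  · simp only [orderCond_iff_eqOn, exists_and_left, Sum.forall, Finset.inl_mem_disjSum,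
      Finset.inr_mem_disjSum, Finset.mem_range, Finset.sum_disjSum, Sum.elim_inl, Sum.elim_inr,
      ← Finset.sum_add_distrib, and_assoc, Sum.exists_sum]
  · simp [mem_degreeLE, ← natDegree_le_iff_degree_le, derivAddEval_apply]

theorem ssp_farkas_alternative_general (k p : ℕ) (ω : ℕ → ℝ) (r : ℝ) :
    Xor
      (∃ δ β : ℕ → ℝ,
        (∀ j < k, 0 ≤ δ j) ∧ (∀ j < k, 0 ≤ β j) ∧ OrderCond k p ω r δ β)
      (∃ q : ℝ[X], q.natDegree ≤ p ∧
        (∀ j < k, 0 ≤ q.eval (OmegaSum ω j)) ∧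
        (∀ j < k, 0 ≤ (derivative q).eval (OmegaSum ω j) + r * q.eval (OmegaSum ω j)) ∧
        q.eval (OmegaSum ω k) < 0) := by
  rw [xor_iff_iff_not, exists_orderCond_iff]
  push Not
  rfl

/-- **Farkas-type alternative for SSP formulae.**  For `r > 0`, exactly one of the
following holds: (i) there is a `k`-step formula of order `p` with SSP coefficient at
least `r`; (ii) there is a real polynomial `q` of degree at most `p` with
`q(Ω_j) ≥ 0` and `q'(Ω_j) + r q(Ω_j) ≥ 0` for `0 ≤ j ≤ k−1`, and `q(Ω_k) < 0`. -/
theorem ssp_farkas_alternative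
    (k p : ℕ) (hk : 1 ≤ k) (hp : 1 ≤ p)
    (ω : ℕ → ℝ) (hω : ∀ i, 1 ≤ i → i ≤ k → 0 < ω i)
    (r : ℝ) (hr : 0 < r) :
    Xor'
      (∃ δ β : ℕ → ℝ,
        (∀ j < k, 0 ≤ δ j) ∧ (∀ j < k, 0 ≤ β j) ∧ OrderCond k p ω r δ β)
      (∃ q : Polynomial ℝ, q.natDegree ≤ p ∧
        (∀ j < k, 0 ≤ q.eval (OmegaSum ω j)) ∧
        (∀ j < k, 0 ≤ (Polynomial.derivative q).eval (OmegaSum ω j)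
          + r * q.eval (OmegaSum ω j)) ∧
        q.eval (OmegaSum ω k) < 0) :=
  ssp_farkas_alternative_general k p ω r
end

section
/- Let Δ₁ > Δ₂ > 1 be real numbers and let P(x) = Δ₁Δ₂ x³ − (Δ₁Δ₂ + Δ₁ + Δ₂) x² + 2(Δ₁ + Δ₂ + 1) x − 6. If condition (C) holds, i.e. Δ₂² − (Δ₁ + 1)Δ₂ + 3Δ₁ > 0 or Δ₁ < 5 + 2√6, then P has exactly one real root. -/
/-!
In the variable `u = Δ₂ x`, the cubic `P` becomes
`2 Δ₂² P(x) = G u ((u - 1)² + 1) + (c u - 2 Δ₂²) ((u - 2)² + 2)`,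
where `G = Δ₂² - (Δ₁ + 1) Δ₂ + 3 Δ₁` and `c = (Δ₁ - Δ₂) (Δ₂ - 1)`. Dividing by `(u - 2)² + 2`
turns `P(x) = 0` into `G u ((u - 1)² + 1) / ((u - 2)² + 2) + c u = 2 Δ₂²`. The quotient is
increasing in `u`, because its increments are positive multiples of a sum of squares, so for
`G ≥ 0` and `c > 0` the left-hand side is an increasing bijection of the real line. For
`1 < Δ₁ < 5 + 2√6` the discriminant `(Δ₁ - 5)² - 24` of `G` as a quadratic in `Δ₂` is negative.
-/

open Filter Function

theorem bijective_add_mul_of_monotone {g : ℝ → ℝ} (hmono : Monotone g) (hcont : Continuous g)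
    {c : ℝ} (hc : 0 < c) : Bijective fun u => g u + c * u := by
  have hstrict : StrictMono fun u => g u + c * u :=
    hmono.add_strictMono (strictMono_id.const_mul hc)
  have htop : Tendsto (fun u => g u + c * u) atTop atTop :=
    tendsto_atTop_add_left_of_le' atTop (g 0)
      ((eventually_ge_atTop 0).mono fun _ hu => hmono hu) (tendsto_id.const_mul_atTop hc)
  have hbot : Tendsto (fun u => g u + c * u) atBot atBot :=
    tendsto_atBot_add_left_of_ge' atBot (g 0)
      ((eventually_le_atBot 0).mono fun _ hu => hmono hu) (tendsto_id.const_mul_atBot hc)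
  exact ⟨hstrict.injective, (hcont.add (continuous_const_mul c)).surjective htop hbot⟩

section OrderedField

variable {K : Type*} [Field K] [LinearOrder K] [IsStrictOrderedRing K]

theorem monotone_mul_div_sq_add_two :
    Monotone fun u : K => u * ((u - 1) ^ 2 + 1) / ((u - 2) ^ 2 + 2) := by
  intro u v huv
  have cross_difference :
      v * ((v - 1) ^ 2 + 1) * ((u - 2) ^ 2 + 2) - u * ((u - 1) ^ 2 + 1) * ((v - 2) ^ 2 + 2) =
        (v - u) *
          ((u * v - 2 * (u + v) + 2) ^ 2 + (u + v - 2) ^ 2 + (u - v) ^ 2 + 4) := by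
    ring
  have cross_difference_nonneg := mul_nonneg (sub_nonneg.mpr huv)
    (by positivity :
      0 ≤ (u * v - 2 * (u + v) + 2) ^ 2 + (u + v - 2) ^ 2 + (u - v) ^ 2 + 4)
  rw [← cross_difference] at cross_difference_nonneg
  exact (div_le_div_iff₀ (by positivity) (by positivity)).mpr
    (sub_nonneg.mp cross_difference_nonneg)

theorem cubic_eq_zero_iff {a b : K} (hb : b ≠ 0) (x : K) :
    a * b * x ^ 3 - (a * b + a + b) * x ^ 2 + 2 * (a + b + 1) * x - 6 = 0 ↔
      (b ^ 2 - (a + 1) * b + 3 * a) *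
          (b * x * ((b * x - 1) ^ 2 + 1) / ((b * x - 2) ^ 2 + 2)) +
        (a - b) * (b - 1) * (b * x) = 2 * b ^ 2 := by
  have hden : (b * x - 2) ^ 2 + 2 ≠ 0 := by positivity
  have decomposition :
      2 * b ^ 2 * (a * b * x ^ 3 - (a * b + a + b) * x ^ 2 + 2 * (a + b + 1) * x - 6) =
        (b ^ 2 - (a + 1) * b + 3 * a) * (b * x * ((b * x - 1) ^ 2 + 1)) +
          ((a - b) * (b - 1) * (b * x) - 2 * b ^ 2) * ((b * x - 2) ^ 2 + 2) := by
    ring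
  have hscale : 2 * b ^ 2 ≠ 0 := by positivity
  rw [← mul_eq_zero_iff_left hscale, decomposition, ← mul_div_assoc, div_add' _ _ _ hden,
    div_eq_iff hden, sub_mul, ← add_sub_assoc, sub_eq_zero]

theorem quadratic_pos_of_sq_sub_five_lt {a : K} (ha : (a - 5) ^ 2 < 24) (b : K) :
    0 < b ^ 2 - (a + 1) * b + 3 * a := by
  have complete_square :
      4 * (b ^ 2 - (a + 1) * b + 3 * a) = (2 * b - (a + 1)) ^ 2 + (24 - (a - 5) ^ 2) := by
    ring
  linarith [complete_square, sq_nonneg (2 * b - (a + 1))]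

end OrderedField

theorem sq_sub_five_lt_twenty_four {a : ℝ} (hlower : 5 - 2 * √6 < a) (hupper : a < 5 + 2 * √6) :
    (a - 5) ^ 2 < 24 :=
  calc
    (a - 5) ^ 2 < (2 * √6) ^ 2 := sq_lt_sq' (by linarith) (by linarith)
    _ = 24 := by rw [mul_pow, Real.sq_sqrt (by norm_num)]; norm_num

theorem condition_quadratic_pos {a b : ℝ} (ha : 1 < a)
    (hC : 0 < b ^ 2 - (a + 1) * b + 3 * a ∨ a < 5 + 2 * √6) :
    0 < b ^ 2 - (a + 1) * b + 3 * a := by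
  have hsqrt : 2 ≤ √6 := Real.le_sqrt_of_sq_le (by norm_num)
  exact hC.elim id fun hupper =>
    quadratic_pos_of_sq_sub_five_lt (sq_sub_five_lt_twenty_four (by linarith) hupper) b

theorem cubic_unique_real_root_general {Δ₁ Δ₂ : ℝ} (hbetween : 0 < (Δ₁ - Δ₂) * (Δ₂ - 1))
    (hG : 0 ≤ Δ₂ ^ 2 - (Δ₁ + 1) * Δ₂ + 3 * Δ₁) :
    ∃! x : ℝ, Δ₁ * Δ₂ * x ^ 3 - (Δ₁ * Δ₂ + Δ₁ + Δ₂) * x ^ 2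
      + 2 * (Δ₁ + Δ₂ + 1) * x - 6 = 0 := by
  have hΔ₂ : Δ₂ ≠ 0 := by
    rintro rfl
    linarith
  have hcont : Continuous fun u : ℝ => u * ((u - 1) ^ 2 + 1) / ((u - 2) ^ 2 + 2) :=
    Continuous.div (by fun_prop) (by fun_prop) fun u => by positivity
  have hbij := bijective_add_mul_of_monotone (monotone_mul_div_sq_add_two.const_mul hG)
    (hcont.const_mul _) hbetween
  exact (existsUnique_congr (cubic_eq_zero_iff hΔ₂)).mpr
    ((hbij.comp (mulLeft_bijective₀ Δ₂ hΔ₂)).existsUnique (2 * Δ₂ ^ 2))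

/-- **Unique real root of the cubic `P` under condition (C).**  For `Δ₁ > Δ₂ > 1` and
`P(x) = Δ₁Δ₂ x³ − (Δ₁Δ₂ + Δ₁ + Δ₂) x² + 2(Δ₁ + Δ₂ + 1) x − 6`, if
`Δ₂² − (Δ₁ + 1)Δ₂ + 3Δ₁ > 0` or `Δ₁ < 5 + 2√6`, then `P` has exactly one real root. -/
theorem cubic_unique_real_root
    (Δ₁ Δ₂ : ℝ) (h21 : 1 < Δ₂) (h12 : Δ₂ < Δ₁)
    (P : ℝ → ℝ)
    (hP : P = fun x => Δ₁ * Δ₂ * x ^ 3 - (Δ₁ * Δ₂ + Δ₁ + Δ₂) * x ^ 2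
      + 2 * (Δ₁ + Δ₂ + 1) * x - 6)
    (hC : Δ₂ ^ 2 - (Δ₁ + 1) * Δ₂ + 3 * Δ₁ > 0 ∨ Δ₁ < 5 + 2 * Real.sqrt 6) :
    ∃! x : ℝ, P x = 0 := by
  subst hP
  exact cubic_unique_real_root_general (mul_pos (sub_pos.mpr h12) (sub_pos.mpr h21))
    (condition_quadratic_pos (h21.trans h12) hC).le
end
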